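/- For any cBCK-algebra A, the spectrum X(A) is a locally compact generalized spectral space: it is T0, quasi-sober, its compact open subsets form a basis closed under finite intersections, and every point has a compact neighborhood. -/

import Mathlib

/-!
No prime ideal theorem is needed: each required property follows by exhibiting a prime ideal
directly. Write `D a = σ(a)`; since `(a]` is the least ideal containing `a`, a prime `P` lies in
`D a` iff `a ∉ P`, and primeness together with `x ∧ y ≤ x, y` gives `D a ∩ D b = D (a ∧ b)`.

* The sets `D a` form a basis, as `σ(I)` is the union of the `D a` for `a ∈ I`.
* Each `D a` is compact (`isCompact_sigmaPt`): for an ultrafilter `F` on the spectrum containing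
  `D a`, the set of all `x` that belong to `F`-almost every prime is itself a prime ideal
  `P ∈ D a`, and `F` converges to `P`. With `D a ∩ D b = D (a ∧ b)`, intersections of compact
  opens are then compact.
* A closed irreducible set `S` has `⋂ S` as its generic point (`quasiSober_spec`): irreducibility,
  tested on the opens `D x` and `D y`, says exactly that `⋂ S` is prime.
-/

universe u v

/-- A commutative BCK-algebra structure on a type `A`. -/
structure CBCK (A : Type u) where
  op : A → A → A
  zero : A
  op_op_comm : ∀ x y z : A, op (op x y) z = op (op x z) y
  op_comm : ∀ x y : A, op x (op x y) = op y (op y x)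
  op_self : ∀ x : A, op x x = zero
  op_zero : ∀ x : A, op x zero = x

namespace CBCK

variable {A : Type u}

/-- The meet `x ∧ y := y·(y·x)`. -/
def meet (C : CBCK A) (x y : A) : A := C.op y (C.op y x)

/-- A subset `I` is an ideal: `0 ∈ I` and `x·y ∈ I`, `y ∈ I` imply `x ∈ I`. -/
def IsIdeal (C : CBCK A) (I : Set A) : Prop :=
  C.zero ∈ I ∧ ∀ x y : A, C.op x y ∈ I → y ∈ I → x ∈ I

/-- A prime ideal: a proper ideal such that `x ∧ y ∈ P` implies `x ∈ P` or `y ∈ P`. -/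
def IsPrimeIdeal (C : CBCK A) (P : Set A) : Prop :=
  C.IsIdeal P ∧ P ≠ Set.univ ∧ ∀ x y : A, C.meet x y ∈ P → x ∈ P ∨ y ∈ P

/-- The ideal generated by a subset `S`: the smallest ideal containing `S`. -/
def idealGen (C : CBCK A) (S : Set A) : Set A :=
  ⋂₀ {I : Set A | C.IsIdeal I ∧ S ⊆ I}

/-- The spectrum: the set of prime ideals. -/
def Spec (C : CBCK A) : Type u := {P : Set A // C.IsPrimeIdeal P}

/-- `σ(I) = {P ∈ X(A) : I ⊄ P}`. -/
def sigmaSet (C : CBCK A) (I : Set A) : Set C.Spec := {P : C.Spec | ¬ I ⊆ P.1}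

/-- `σ(a) = σ((a])`. -/
def sigmaPt (C : CBCK A) (a : A) : Set C.Spec := C.sigmaSet (C.idealGen {a})

/-- Iterated subtraction: `x·y⁰ = x`, `x·yⁿ⁺¹ = (x·yⁿ)·y`. -/
def opPow (C : CBCK A) (x y : A) : ℕ → A
  | 0 => x
  | n + 1 => C.op (C.opPow x y n) y

/-- A subset `B` is a subalgebra: contains `0` and is closed under the operation. -/
def IsSubalg (C : CBCK A) (B : Set A) : Prop :=
  C.zero ∈ B ∧ ∀ x ∈ B, ∀ y ∈ B, C.op x y ∈ B

/-- The subalgebra generated by a subset. -/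
def subalgGen (C : CBCK A) (S : Set A) : Set A :=
  ⋂₀ {B : Set A | C.IsSubalg B ∧ S ⊆ B}

/-- `I` is an ideal of the subalgebra `B`. -/
def IsIdealIn (C : CBCK A) (B I : Set A) : Prop :=
  I ⊆ B ∧ C.zero ∈ I ∧ ∀ x ∈ B, ∀ y ∈ B, C.op x y ∈ I → y ∈ I → x ∈ I

/-- `P` is a prime ideal of the subalgebra `B`. -/
def IsPrimeIdealIn (C : CBCK A) (B P : Set A) : Prop :=
  C.IsIdealIn B P ∧ P ≠ B ∧ ∀ x ∈ B, ∀ y ∈ B, C.meet x y ∈ P → x ∈ P ∨ y ∈ P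

/-- The spectrum of a subalgebra `B`: its set of prime ideals. -/
def SpecIn (C : CBCK A) (B : Set A) : Type u := {P : Set A // C.IsPrimeIdealIn B P}

/-- The annihilator `S* = {a : a ∧ s = 0 for all s ∈ S}`. -/
def ann (C : CBCK A) (S : Set A) : Set A := {a : A | ∀ s ∈ S, C.meet a s = C.zero}

/-- The annihilator of `S` computed inside the subalgebra `B`. -/
def annIn (C : CBCK A) (B S : Set A) : Set A :=
  {a : A | a ∈ B ∧ ∀ s ∈ S, C.meet a s = C.zero}

/-- `A` is involutory: every ideal `I` satisfies `I = I**`. -/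
def Involutory (C : CBCK A) : Prop := ∀ I : Set A, C.IsIdeal I → C.ann (C.ann I) = I

/-- The subalgebra `B` is involutory. -/
def InvolutoryIn (C : CBCK A) (B : Set A) : Prop :=
  ∀ I : Set A, C.IsIdealIn B I → C.annIn B (C.annIn B I) = I

/-- The data of `A` being the cBCK-union of the family of subalgebras `Aset`:
the subalgebras cover `A`, pairwise intersect in `{0}`, and the operation between
distinct members is `x·y = x`. -/
def IsUnionFamily (C : CBCK A) {Λ : Type v} (Aset : Λ → Set A) : Prop :=
  (∀ x : A, ∃ l : Λ, x ∈ Aset l) ∧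
  (∀ l : Λ, C.IsSubalg (Aset l)) ∧
  (∀ l m : Λ, l ≠ m → Aset l ∩ Aset m = {C.zero}) ∧
  (∀ l m : Λ, l ≠ m → ∀ x ∈ Aset l, ∀ y ∈ Aset m, C.op x y = x)

end CBCK

namespace CBCK

variable {A : Type u} (C : CBCK A)

lemma zero_op (x : A) : C.op C.zero x = C.zero := by
  have h : C.op C.zero (C.op C.zero x) = C.zero := by
    rw [C.op_comm, C.op_zero, C.op_self]
  have h2 := C.op_op_comm C.zero (C.op C.zero x) x
  rwa [h, C.op_self] at h2

/-- `x·y ≤ x`, written as an equation. -/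
lemma op_op_self (x y : A) : C.op (C.op x y) x = C.zero := by
  rw [C.op_op_comm, C.op_self, C.zero_op]

variable {C}

lemma IsIdeal.op_mem {I : Set A} (hI : C.IsIdeal I) {x : A} (y : A) (hx : x ∈ I) :
    C.op x y ∈ I :=
  hI.2 _ x (by rw [op_op_self]; exact hI.1) hx

lemma IsIdeal.meet_mem_right {I : Set A} (hI : C.IsIdeal I) (x : A) {y : A} (hy : y ∈ I) :
    C.meet x y ∈ I :=
  hI.op_mem _ hy

lemma IsIdeal.meet_mem_left {I : Set A} (hI : C.IsIdeal I) {x : A} (y : A) (hx : x ∈ I) :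
    C.meet x y ∈ I := by
  rw [meet, C.op_comm]
  exact hI.op_mem _ hx

lemma isIdeal_idealGen (S : Set A) : C.IsIdeal (C.idealGen S) :=
  ⟨fun _ hI => hI.1.1, fun x y hxy hy I hI => hI.1.2 x y (hxy I hI) (hy I hI)⟩

lemma mem_sigmaPt {a : A} {P : C.Spec} : P ∈ C.sigmaPt a ↔ a ∉ P.1 := by
  refine not_congr ⟨fun h => h fun I hI => hI.2 rfl, fun h x hx => ?_⟩
  exact hx P.1 ⟨P.2.1, by simpa using h⟩

lemma mem_sigmaSet {I : Set A} {P : C.Spec} : P ∈ C.sigmaSet I ↔ ∃ a ∈ I, a ∉ P.1 :=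
  Set.not_subset

lemma sigmaPt_inter (a b : A) : C.sigmaPt a ∩ C.sigmaPt b = C.sigmaPt (C.meet a b) := by
  ext P
  simp only [Set.mem_inter_iff, mem_sigmaPt]
  refine ⟨fun h hab => (P.2.2.2 a b hab).elim h.1 h.2, fun h => ?_⟩
  exact ⟨fun ha => h (P.2.1.meet_mem_left b ha), fun hb => h (P.2.1.meet_mem_right a hb)⟩

/-- The sets `σ(I)`, `I` an ideal, are exactly the open sets of the topology on the spectrum. -/
def IsSpecTopology (C : CBCK A) [TopologicalSpace C.Spec] : Prop :=
  ∀ s : Set C.Spec, IsOpen s ↔ ∃ I : Set A, C.IsIdeal I ∧ s = C.sigmaSet I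

variable [TopologicalSpace C.Spec]

lemma isOpen_sigmaPt (hT : C.IsSpecTopology) (a : A) : IsOpen (C.sigmaPt a) :=
  (hT _).2 ⟨_, isIdeal_idealGen _, rfl⟩

lemma isTopologicalBasis_sigmaPt (hT : C.IsSpecTopology) :
    TopologicalSpace.IsTopologicalBasis (Set.range C.sigmaPt) := by
  refine TopologicalSpace.isTopologicalBasis_of_isOpen_of_nhds ?_ fun P U hP hU => ?_
  · rintro _ ⟨a, rfl⟩
    exact isOpen_sigmaPt hT a
  · obtain ⟨I, -, rfl⟩ := (hT U).1 hU
    obtain ⟨a, haI, haP⟩ := mem_sigmaSet.1 hP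
    exact ⟨_, ⟨a, rfl⟩, mem_sigmaPt.2 haP,
      fun Q hQ => mem_sigmaSet.2 ⟨a, haI, mem_sigmaPt.1 hQ⟩⟩

lemma isCompact_sigmaPt (hT : C.IsSpecTopology) (a : A) : IsCompact (C.sigmaPt a) := by
  refine isCompact_iff_ultrafilter_le_nhds'.2 fun F hF => ?_
  have haF : ∀ᶠ Q : C.Spec in (F : Filter C.Spec), a ∉ Q.1 :=
    Filter.mem_of_superset hF fun Q hQ => mem_sigmaPt.1 hQ
  let J : Set A := {x | ∀ᶠ Q : C.Spec in (F : Filter C.Spec), x ∈ Q.1}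
  have haJ : a ∉ J := Ultrafilter.eventually_not.1 haF
  have hJ : C.IsPrimeIdeal J := by
    refine ⟨⟨.of_forall fun Q => Q.2.1.1, fun x y hxy hy => ?_⟩, fun h => ?_, fun x y hxy => ?_⟩
    · filter_upwards [hxy, hy] with Q h1 h2 using Q.2.1.2 x y h1 h2
    · exact haJ (h ▸ Set.mem_univ a)
    · exact Ultrafilter.eventually_or.1 (hxy.mono fun Q hQ => Q.2.2.2 x y hQ)
  refine ⟨⟨J, hJ⟩, mem_sigmaPt.2 haJ, ?_⟩
  refine ((isTopologicalBasis_sigmaPt hT).nhds_hasBasis.ge_iff).2 ?_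
  rintro _ ⟨⟨b, rfl⟩, hb⟩
  have hbF : ∀ᶠ Q : C.Spec in (F : Filter C.Spec), b ∉ Q.1 :=
    Ultrafilter.eventually_not.2 (mem_sigmaPt.1 hb)
  exact hbF.mono fun Q hQ => mem_sigmaPt.2 hQ

lemma t0Space_spec (hT : C.IsSpecTopology) : T0Space C.Spec := by
  refine ⟨fun P Q hPQ => Subtype.ext (Set.ext fun a => not_iff_not.1 ?_)⟩
  simpa only [mem_sigmaPt] using hPQ.mem_open_iff (isOpen_sigmaPt hT a)

lemma quasiSober_spec (hT : C.IsSpecTopology) : QuasiSober C.Spec := by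
  refine ⟨fun {S} hS hSc => ?_⟩
  let J : Set A := {x | ∀ P ∈ S, x ∈ P.1}
  have hJ : C.IsPrimeIdeal J := by
    refine ⟨⟨fun P _ => P.2.1.1, fun x y hxy hy P hP => P.2.1.2 x y (hxy P hP) (hy P hP)⟩,
      fun h => ?_, fun x y hxy => ?_⟩
    · obtain ⟨P, hP⟩ := hS.nonempty
      exact P.2.2.1 (Set.eq_univ_of_forall fun x => (h ▸ Set.mem_univ x : x ∈ J) P hP)
    · by_contra! hne
      have hmeets : ∀ z, z ∉ J → (S ∩ C.sigmaPt z).Nonempty := by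
        intro z hz
        simp only [J, Set.mem_ofPred_eq, not_forall] at hz
        obtain ⟨P, hP, hzP⟩ := hz
        exact ⟨P, hP, mem_sigmaPt.2 hzP⟩
      obtain ⟨P, hP, hPxy⟩ := hS.isPreirreducible _ _ (isOpen_sigmaPt hT x)
        (isOpen_sigmaPt hT y) (hmeets x hne.1) (hmeets y hne.2)
      rw [sigmaPt_inter] at hPxy
      exact mem_sigmaPt.1 hPxy (hxy P hP)
  have hJS : (⟨J, hJ⟩ : C.Spec) ∈ S := by
    obtain ⟨I, -, hI⟩ := (hT Sᶜ).1 hSc.isOpen_compl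
    by_contra hn
    obtain ⟨a, haI, haJ⟩ := mem_sigmaSet.1 (hI ▸ hn : (⟨J, hJ⟩ : C.Spec) ∈ C.sigmaSet I)
    refine haJ fun P hP => ?_
    by_contra haP
    exact (hI ▸ mem_sigmaSet.2 ⟨a, haI, haP⟩ : P ∈ Sᶜ) hP
  refine ⟨⟨J, hJ⟩, (isGenericPoint_iff_forall_closed hSc hJS).2 fun Z hZ hJZ P hP => ?_⟩
  obtain ⟨I, -, hI⟩ := (hT Zᶜ).1 hZ.isOpen_compl
  by_contra hn
  obtain ⟨a, haI, haP⟩ := mem_sigmaSet.1 (hI ▸ hn : P ∈ C.sigmaSet I)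
  have hJ' : (⟨J, hJ⟩ : C.Spec) ∈ C.sigmaSet I :=
    mem_sigmaSet.2 ⟨a, haI, fun haJ => haP (haJ P hP)⟩
  exact (hI ▸ hJ' : (⟨J, hJ⟩ : C.Spec) ∈ Zᶜ) hJZ

end CBCK

/-- The spectrum of any cBCK-algebra is a locally compact
generalized spectral space: T0, quasi-sober, its compact opens form a
multiplicative basis, and every point has a compact neighborhood. -/
theorem spec_locally_compact_generalized_spectral {A : Type u} (C : CBCK A)
    [ts : TopologicalSpace C.Spec]
    (hT : ∀ s : Set C.Spec, IsOpen s ↔ ∃ I : Set A, C.IsIdeal I ∧ s = C.sigmaSet I) :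
    T0Space C.Spec ∧ QuasiSober C.Spec ∧
      TopologicalSpace.IsTopologicalBasis {s : Set C.Spec | IsCompact s ∧ IsOpen s} ∧
      (∀ u v : Set C.Spec, IsCompact u ∧ IsOpen u → IsCompact v ∧ IsOpen v →
        IsCompact (u ∩ v) ∧ IsOpen (u ∩ v)) ∧
      WeaklyLocallyCompactSpace C.Spec := by
  have hT' : C.IsSpecTopology := hT
  have hbasis := CBCK.isTopologicalBasis_sigmaPt hT'
  have : PrespectralSpace C.Spec :=
    .of_isTopologicalBasis' hbasis (CBCK.isCompact_sigmaPt hT')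
  have : QuasiSeparatedSpace C.Spec := .of_isTopologicalBasis hbasis fun a b => by
    rw [CBCK.sigmaPt_inter]
    exact CBCK.isCompact_sigmaPt hT' _
  refine ⟨CBCK.t0Space_spec hT', CBCK.quasiSober_spec hT', ?_, fun u v hu hv => ?_, inferInstance⟩
  · simpa only [and_comm] using PrespectralSpace.isTopologicalBasis (X := C.Spec)
  · exact ⟨QuasiSeparatedSpace.inter_isCompact u v hu.2 hu.1 hv.2 hv.1, hu.2.inter hv.2⟩
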